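/- In N(n), suppose 1 ≤ i ≤ i' < j' ≤ n, i < j ≤ n, 0 ≤ k ≤ j − j', and 0 ≤ k' ≤ j' − i'. Then Y_{[i',j'];k'} Y_{[i,j];k} = Y_{[i,j];k} Y_{[i'+k, j'+k];k'}. -/

import Mathlib

/-- Index type for the generators `Y_1, …, Y_{n-1}` of the nilCoxeter algebra `N(n)`. -/
abbrev NIdx (n : ℕ) := {i : ℕ // 1 ≤ i ∧ i + 1 ≤ n}

/-- The generator `Y_i` in the free algebra (junk value `0` outside `1 ≤ i ≤ n-1`). -/
noncomputable def Yf (n : ℕ) (i : ℕ) : FreeAlgebra ℤ (NIdx n) :=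
  if h : 1 ≤ i ∧ i + 1 ≤ n then FreeAlgebra.ι ℤ ⟨i, h⟩ else 0

/-- The defining relations of the nilCoxeter algebra `N(n)` of the symmetric group `S_n`:
`Y_i² = 0`, the braid relations `Y_i Y_{i+1} Y_i = Y_{i+1} Y_i Y_{i+1}`, and the
commutation relations `Y_i Y_j = Y_j Y_i` for `|i - j| ≥ 2`. -/
inductive NRel (n : ℕ) : FreeAlgebra ℤ (NIdx n) → FreeAlgebra ℤ (NIdx n) → Prop
  | sq (i : NIdx n) : NRel n (FreeAlgebra.ι ℤ i * FreeAlgebra.ι ℤ i) 0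
  | braid (i j : NIdx n) (h : j.1 = i.1 + 1) :
      NRel n (FreeAlgebra.ι ℤ i * FreeAlgebra.ι ℤ j * FreeAlgebra.ι ℤ i)
        (FreeAlgebra.ι ℤ j * FreeAlgebra.ι ℤ i * FreeAlgebra.ι ℤ j)
  | comm (i j : NIdx n) (h : i.1 + 2 ≤ j.1 ∨ j.1 + 2 ≤ i.1) :
      NRel n (FreeAlgebra.ι ℤ i * FreeAlgebra.ι ℤ j)
        (FreeAlgebra.ι ℤ j * FreeAlgebra.ι ℤ i)

/-- The nilCoxeter algebra `N(n)` of the symmetric group `S_n` over `ℤ`. -/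
abbrev Nring (n : ℕ) := RingQuot (NRel n)

/-- The image of the generator `Y_i` in `N(n)`. -/
noncomputable def Ygen (n : ℕ) (i : ℕ) : Nring n :=
  RingQuot.mkRingHom (NRel n) (Yf n i)

/-- `Y_{[i,j]} = Y_{j-1} Y_{j-2} ⋯ Y_{i+1} Y_i`, with `Y_{[i,i]} = 1`. -/
noncomputable def Yint (n : ℕ) (i j : ℕ) : Nring n :=
  (((List.range' i (j - i)).reverse).map (Ygen n)).prod

/-- `Y_{[i,j];k} = Y_{[i,j+1-k]} Y_{[i+1,j+2-k]} ⋯ Y_{[i+k-1,j]}`, with `Y_{[i,j];0} = 1`. -/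
noncomputable def Yintk (n : ℕ) (i j k : ℕ) : Nring n :=
  ((List.range k).map fun t => Yint n (i + t) (j + 1 - k + t)).prod

/-!
Only the braid relations matter, so the argument takes place in any monoid. Moving `Y_{m+1}`
leftwards through `Y_{[i,j]}` for `i ≤ m ≤ j - 2` turns it into `Y_m`: it commutes past the
factors below `Y_m`, one braid move changes it, and `Y_m` commutes with the factors above
`Y_{m+1}`. The `k` factors of `Y_{[i,j];k}` therefore lower `Y_{m+k}` to `Y_m`, and applying this
to each generator occurring in `Y_{[i'+k,j'+k];k'}` gives the identity.
-/

section BraidRelations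

variable {M : Type*} [Monoid M] {y y' : ℕ → M} {s t : Set ℕ} {x : M} {i j i' j' k k' m : ℕ}

/-- The braid relations of type `A` among the elements `y m`, `m ∈ s`, of a monoid: neighbouring
elements braid and all others commute. The nilCoxeter relations add only `y m * y m = 0`. -/
structure IsBraidOn (y : ℕ → M) (s : Set ℕ) : Prop where
  commute : ∀ ⦃a⦄, a ∈ s → ∀ ⦃b⦄, b ∈ s → a + 2 ≤ b → Commute (y a) (y b)
  braid : ∀ ⦃a⦄, a ∈ s → a + 1 ∈ s → y a * y (a + 1) * y a = y (a + 1) * y a * y (a + 1)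

theorem IsBraidOn.mono (hy : IsBraidOn y t) (hst : s ⊆ t) : IsBraidOn y s where
  commute _ ha _ hb := hy.commute (hst ha) (hst hb)
  braid _ ha ha' := hy.braid (hst ha) (hst ha')

/-- The analogue of `Y_{[i,j]}` for a sequence `y` in a monoid: `y (j - 1) * ⋯ * y (i + 1) * y i`,
which is `1` if `j ≤ i`. -/
def descProd (y : ℕ → M) (i j : ℕ) : M :=
  ((List.range' i (j - i)).reverse.map y).prod

/-- The analogue of `Y_{[i,j];k}` for a sequence `y` in a monoid. The index `j + 1 - k` is
meaningful only for `k ≤ j + 1`. -/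
def descBlock (y : ℕ → M) (i j k : ℕ) : M :=
  ((List.range k).map fun t => descProd y (i + t) (j + 1 - k + t)).prod

theorem descProd_succ_right (h : i ≤ j) : descProd y i (j + 1) = y j * descProd y i j := by
  simp [descProd, Nat.succ_sub h, List.range'_concat, Nat.add_sub_cancel' h]

theorem descProd_add_right (y : ℕ → M) (i j k : ℕ) :
    descProd y (i + k) (j + k) = descProd (fun m => y (m + k)) i j := by
  have hrange : List.range' (i + k) (j - i) = (List.range' i (j - i)).map (· + k) := by
    simpa only [Nat.add_comm] using (List.map_add_range' (a := k) i (j - i) 1).symm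
  rw [descProd, descProd, Nat.add_sub_add_right, hrange, ← List.map_reverse, List.map_map]
  rfl

theorem descBlock_zero (y : ℕ → M) (i j : ℕ) : descBlock y i j 0 = 1 := rfl

theorem descBlock_succ (h : k ≤ j + 1) :
    descBlock y i (j + 1) (k + 1) = descBlock y i j k * descProd y (i + k) (j + 1) := by
  simp [descBlock, List.range_succ, Nat.sub_add_cancel h]

theorem descBlock_add_right (h : k' ≤ j + 1) :
    descBlock y (i + k) (j + k) k' = descBlock (fun m => y (m + k)) i j k' := by
  have hj : j + k + 1 - k' = j + 1 - k' + k := by omega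
  simp only [descBlock, hj, ← descProd_add_right, Nat.add_right_comm]

theorem semiconjBy_list_prod_map {ι : Type*} {f g : ι → M} {l : List ι}
    (h : ∀ a ∈ l, SemiconjBy x (f a) (g a)) : SemiconjBy x (l.map f).prod (l.map g).prod :=
  List.rel_prod (SemiconjBy.one_right x) (fun _ _ ha _ _ hb => ha.mul_right hb)
    (List.forall₂_map_left_iff.2 (List.forall₂_map_right_iff.2 (List.forall₂_same.2 h)))

theorem semiconjBy_descProd (h : ∀ m ∈ Set.Ico i j, SemiconjBy x (y m) (y' m)) :
    SemiconjBy x (descProd y i j) (descProd y' i j) := by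
  refine semiconjBy_list_prod_map fun m hm => h m ?_
  rw [List.mem_reverse, List.mem_range'_1] at hm
  exact ⟨hm.1, by omega⟩

theorem semiconjBy_descBlock (h : ∀ m ∈ Set.Ico i j, SemiconjBy x (y m) (y' m)) :
    SemiconjBy x (descBlock y i j k) (descBlock y' i j k) := by
  refine semiconjBy_list_prod_map fun t ht => semiconjBy_descProd fun m hm => h m ?_
  rw [List.mem_range] at ht
  rw [Set.mem_Ico] at hm ⊢
  omega

namespace IsBraidOn

theorem semiconjBy_descProd_add_two (hy : IsBraidOn y (Set.Ico i (m + 2))) (him : i ≤ m) :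
    SemiconjBy (descProd y i (m + 2)) (y (m + 1)) (y m) := by
  have hm : m ∈ Set.Ico i (m + 2) := ⟨him, by omega⟩
  have hm' : m + 1 ∈ Set.Ico i (m + 2) := ⟨by omega, by omega⟩
  have hcomm : Commute (y (m + 1)) (descProd y i m) :=
    semiconjBy_descProd fun a ha =>
      (hy.commute ⟨ha.1, ha.2.trans (by omega)⟩ hm' (Nat.add_le_add_right ha.2 1)).symm
  rw [descProd_succ_right (him.trans m.le_succ), descProd_succ_right him]
  calc y (m + 1) * (y m * descProd y i m) * y (m + 1)
      = y (m + 1) * y m * y (m + 1) * descProd y i m := by simp only [mul_assoc, hcomm.eq]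
    _ = y m * y (m + 1) * y m * descProd y i m := by rw [hy.braid hm hm']
    _ = y m * (y (m + 1) * (y m * descProd y i m)) := by simp only [mul_assoc]

theorem semiconjBy_descProd (hy : IsBraidOn y (Set.Ico i j)) (him : i ≤ m) (hmj : m + 2 ≤ j) :
    SemiconjBy (descProd y i j) (y (m + 1)) (y m) := by
  induction j, hmj using Nat.le_induction with
  | base => exact hy.semiconjBy_descProd_add_two him
  | succ j hmj ih =>
    have hcomm : Commute (y j) (y m) :=
      (hy.commute ⟨him, by omega⟩ ⟨by omega, j.lt_succ_self⟩ hmj).symm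
    rw [descProd_succ_right (by omega)]
    exact SemiconjBy.mul_left hcomm (ih (hy.mono (Set.Ico_subset_Ico_right j.le_succ)))

theorem semiconjBy_descBlock (hy : IsBraidOn y (Set.Ico i j)) (him : i ≤ m)
    (hmj : m + k + 1 ≤ j) : SemiconjBy (descBlock y i j k) (y (m + k)) (y m) := by
  induction k generalizing j with
  | zero => exact SemiconjBy.one_left (y m)
  | succ k ih =>
    obtain ⟨j, rfl⟩ : ∃ l, j = l + 1 := ⟨j - 1, by omega⟩
    rw [descBlock_succ (by omega)]
    have hblock : SemiconjBy (descBlock y i j k) (y (m + k)) (y m) :=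
      ih (hy.mono (Set.Ico_subset_Ico_right j.le_succ)) (by omega)
    have hlast : SemiconjBy (descProd y (i + k) (j + 1)) (y (m + k + 1)) (y (m + k)) :=
      (hy.mono (Set.Ico_subset_Ico_left (i.le_add_right k))).semiconjBy_descProd
        (Nat.add_le_add_right him k) (by omega)
    exact hblock.mul_left hlast

end IsBraidOn

theorem Yintk_commute_general (hy : IsBraidOn y (Set.Ico i j)) (hi : i ≤ i') (hk : k ≤ j - j')
    (hk' : k' ≤ j' + 1) :
    descBlock y i' j' k' * descBlock y i j k =
      descBlock y i j k * descBlock y (i' + k) (j' + k) k' := by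
  -- The subtraction in `hk` truncates: it bounds `j' + k` by `j` only for positive `k`.
  obtain rfl | hk_pos := k.eq_zero_or_pos
  · simp [descBlock_zero]
  · rw [descBlock_add_right hk']
    refine (semiconjBy_descBlock fun m hm => ?_).eq.symm
    rw [Set.mem_Ico] at hm
    exact hy.semiconjBy_descBlock (hi.trans hm.1) (by omega)

end BraidRelations

theorem Ygen_of_mem {n a : ℕ} (ha : a ∈ Set.Ico 1 n) :
    Ygen n a = RingQuot.mkRingHom (NRel n) (FreeAlgebra.ι ℤ ⟨a, ha⟩) :=
  congrArg _ (dif_pos ha)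

theorem isBraidOn_Ygen (n : ℕ) : IsBraidOn (Ygen n) (Set.Ico 1 n) where
  commute a ha b hb hab := by
    rw [Ygen_of_mem ha, Ygen_of_mem hb, commute_iff_eq, ← map_mul, ← map_mul]
    exact RingQuot.mkRingHom_rel (.comm _ _ (.inl hab))
  braid a ha ha' := by
    simp only [Ygen_of_mem ha, Ygen_of_mem ha', ← map_mul]
    exact RingQuot.mkRingHom_rel (.braid _ _ rfl)

/-- In `N(n)`, if `1 ≤ i ≤ i' < j' ≤ n`, `i < j ≤ n`, `k ≤ j - j'` and
`k' ≤ j' - i'`, then `Y_{[i',j'];k'} Y_{[i,j];k} = Y_{[i,j];k} Y_{[i'+k,j'+k];k'}`. -/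
theorem Yintk_commute (n : ℕ) (hn : 2 ≤ n) (i j i' j' k k' : ℕ)
    (h1 : 1 ≤ i) (h2 : i ≤ i') (h3 : i' < j') (h4 : j' ≤ n)
    (h5 : i < j) (h6 : j ≤ n) (h7 : k ≤ j - j') (h8 : k' ≤ j' - i') :
    Yintk n i' j' k' * Yintk n i j k = Yintk n i j k * Yintk n (i' + k) (j' + k) k' :=
  Yintk_commute_general ((isBraidOn_Ygen n).mono (Set.Ico_subset_Ico h1 h6)) h2 h7 (by omega)
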